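/- There is an absolute constant ε₁ > 0 with the following property: for every λ₀ ∈ ℂ, δ > 0, and compact set K, if γ(B(λ₀, δ) ∖ K) < ε₁·δ, then |f(λ)| ≤ ‖f‖_{L^∞(B(λ₀,δ)∩K)} (essential supremum with respect to planar Lebesgue measure restricted to B(λ₀,δ) ∩ K) for every λ ∈ B(λ₀, δ/2) and every f in A(B(λ₀, δ)), the uniform closure of the polynomials in C(closed ball B̄(λ₀, δ)). -/

import Mathlib

/-!
Suppose `M = ‖f‖_{L^∞(B(w₀,δ) ∩ K)} < |f(l)|` for some `l ∈ B(w₀, δ/2)`. The open set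
`V = {z ∈ B(w₀,δ) : M < |f z|}` contains `l`, and `V ∩ K` has area zero. By the maximum principle
the component of `l` in `V` contains a point `b` with `|l - b| ≥ δ/4` (`exists_far_chain`), so `l`
and `b` are joined by a polygonal path inside `V`.

Off such a path the function `g(z) = z - (l + b)/2 - √((z - l)(z - b))` is analytic, it is bounded
by `6δ`, and `z g(z) → (l - b)²/8` at infinity (`chain_function`). Thus the path has capacity
comparable to `δ`; but it may lie in `K`. To reach `B(w₀,δ) ∖ K`, a smooth cutoff turns `g` into a
`C¹` function, which by the Cauchy–Pompeiu formula is the Cauchy transform of a bounded density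
supported on a compact `S ⊆ V`. As `S ∩ K` has area zero, there is a compact `F ⊆ S ∖ K` with
`S ∖ F` of arbitrarily small area. The kernel `1/(w - z)` being uniformly integrable in `z`, the
Cauchy transform of the density restricted to `F` is bounded by `2 · 6δ` and keeps at least half of
the leading coefficient (`cap_ge_of_null`). Hence `γ(B(w₀,δ) ∖ K) ≥ (δ²/128) / (4 · 6δ) = δ/3072`, and
`ε₁ = 1/3072` works.
-/

open MeasureTheory Metric Filter Set Complex Topology Bornology
open scoped ENNReal NNReal Real

noncomputable section

/-- Admissible-function quantity defining analytic capacity of a compact set. -/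
def capAux (F : Set ℂ) : ℝ :=
  sSup {r : ℝ | ∃ f : ℂ → ℂ, DifferentiableOn ℂ f Fᶜ ∧ (∀ z ∈ Fᶜ, ‖f z‖ ≤ 1) ∧
    ∃ f0 d : ℂ, Tendsto f (cobounded ℂ) (𝓝 f0) ∧
      Tendsto (fun z => z * (f z - f0)) (cobounded ℂ) (𝓝 d) ∧ r = ‖d‖}

/-- Analytic capacity of an arbitrary set. -/
def anCap (E : Set ℂ) : ℝ :=
  sSup {r : ℝ | ∃ F : Set ℂ, IsCompact F ∧ F ⊆ E ∧ r = capAux F}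

/-- Nontangential approach region Γ_σ(z). -/
def ntRegion (σ : ℝ) (z : ℂ) : Set ℂ :=
  interior (convexHull ℝ ({z} ∪ ball (0 : ℂ) σ))

/-- Cauchy transform of the complex measure ρ dμ. -/
def cauchyT (μ : Measure ℂ) (ρ : ℂ → ℂ) (l : ℂ) : ℂ :=
  ∫ w, (w - l)⁻¹ * ρ w ∂μ

/-- The set U(ρ dμ) of absolute convergence of the Cauchy transform. -/
def cauchyDom (μ : Measure ℂ) (ρ : ℂ → ℂ) : Set ℂ :=
  {l | Integrable (fun w => (w - l)⁻¹ * ρ w) μ}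

/-- 1-dimensional radial maximal function of a (positive) measure. -/
def radialMax (m : Measure ℂ) (z : ℂ) : ℝ≥0∞ :=
  ⨆ (r : ℝ) (_ : 0 < r), m (ball z r) / ENNReal.ofReal r

/-- Normalized arclength measure `dθ/2π` on the unit circle. -/
def circleMeasure : Measure ℂ :=
  (ENNReal.ofReal (2 * Real.pi))⁻¹ •
    (Measure.map (fun θ : ℝ => Complex.exp ((θ : ℂ) * Complex.I))
      (volume.restrict (Ico (0:ℝ) (2 * Real.pi))))

/-- Rational functions with poles off K. -/
def RatOn (K : Set ℂ) : Set (ℂ → ℂ) :=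
  {f | ∃ p q : Polynomial ℂ, (∀ z ∈ K, q.eval z ≠ 0) ∧ f = fun z => p.eval z / q.eval z}

/-- The `L^t(μ)` norm, for a real exponent `t`. -/
def tnorm (t : ℝ) (μ : Measure ℂ) (f : ℂ → ℂ) : ℝ :=
  (∫ z, ‖f z‖ ^ t ∂μ) ^ (1 / t)

/-- `C` is a bound for the evaluation functional at `l` on `Rat(K) ⊆ L^t(μ)`. -/
def EvalBound (t : ℝ) (K : Set ℂ) (μ : Measure ℂ) (l : ℂ) (C : ℝ) : Prop :=
  ∀ f ∈ RatOn K, ‖f l‖ ≤ C * tnorm t μ f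

/-- The norm `M_λ` of the evaluation functional at `l` on `R^t(K,μ)`. -/
def evalNorm (t : ℝ) (K : Set ℂ) (μ : Measure ℂ) (l : ℂ) : ℝ :=
  sInf {C : ℝ | 0 ≤ C ∧ EvalBound t K μ l C}

/-- Analytic bounded point evaluations of `R^t(K,μ)`: points having a neighborhood of
bounded point evaluations with uniformly bounded evaluation functionals (equivalently,
on which all evaluations extend analytically). -/
def abpeSet (t : ℝ) (K : Set ℂ) (μ : Measure ℂ) : Set ℂ :=
  {l | ∃ δ : ℝ, 0 < δ ∧ ∃ C : ℝ, ∀ w ∈ ball l δ, EvalBound t K μ w C}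

/-- Membership in `R^t(K,μ)`, the closure of `Rat(K)` in `L^t(μ)`. -/
def RtMem (t : ℝ) (K : Set ℂ) (μ : Measure ℂ) (f : ℂ → ℂ) : Prop :=
  ∃ r : ℕ → ℂ → ℂ, (∀ n, r n ∈ RatOn K) ∧
    Tendsto (fun n => ∫ z, ‖r n z - f z‖ ^ t ∂μ) atTop (𝓝 0)

/-- `R^t(K,μ)` is irreducible: it contains no nontrivial characteristic function. -/
def RtIrred (t : ℝ) (K : Set ℂ) (μ : Measure ℂ) : Prop :=
  ∀ E : Set ℂ, MeasurableSet E → RtMem t K μ (E.indicator 1) → μ E = 0 ∨ μ Eᶜ = 0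

/-- The strong outer boundary `∂_so Ω`. -/
def strongOuter (Ω : Set ℂ) : Set ℂ :=
  {z | z ∈ frontier Ω ∧ ∃ δ : ℝ, 0 < δ ∧ δ < 1 ∧ ntRegion (1/2) z ∩ ball z δ ⊆ Ω}

/-- The open cone with vertical axis at `l` of aperture `α`. -/
def coneAt (l : ℂ) (α : ℝ) : Set ℂ := {z | |z.re - l.re| < α * |z.im - l.im|}

def coneUp (l : ℂ) (α : ℝ) : Set ℂ := {z | z ∈ coneAt l α ∧ l.im < z.im}

def coneDown (l : ℂ) (α : ℝ) : Set ℂ := {z | z ∈ coneAt l α ∧ z.im < l.im}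

def coneUpT (δ : ℝ) (l : ℂ) (α : ℝ) : Set ℂ := ball l δ ∩ coneUp l α

def coneDownT (δ : ℝ) (l : ℂ) (α : ℝ) : Set ℂ := ball l δ ∩ coneDown l α

/-- The graph of `A : ℝ → ℝ` inside `ℂ`. -/
def lipGraph (A : ℝ → ℝ) : Set ℂ := {z | z.im = A z.re}

/-- The upper cone at `l` is outer for `K`. -/
def upperOuter (K : Set ℂ) (l : ℂ) (α : ℝ) : Prop :=
  ∃ δl εl : ℝ, 0 < δl ∧ 0 < εl ∧ ∀ δ : ℝ, 0 < δ → δ < δl →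
    ∃ lδ : ℂ, ball lδ (εl * δ) ⊆ Kᶜ ∩ coneUpT δ l α

/-- The lower cone at `l` is outer for `K`. -/
def lowerOuter (K : Set ℂ) (l : ℂ) (α : ℝ) : Prop :=
  ∃ δl εl : ℝ, 0 < δl ∧ 0 < εl ∧ ∀ δ : ℝ, 0 < δ → δ < δl →
    ∃ lδ : ℂ, ball lδ (εl * δ) ⊆ Kᶜ ∩ coneDownT δ l α

/-- The type I boundary `∂_{I,α}^{LG} K`. -/
def typeI (K : Set ℂ) (A : ℝ → ℝ) (α : ℝ) : Set ℂ :=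
  {l | l ∈ lipGraph A ∧ l ∈ frontier K ∧ (upperOuter K l α ∨ lowerOuter K l α)}

def upperInner (Ω : Set ℂ) (l : ℂ) (α : ℝ) : Prop := ∃ δ : ℝ, 0 < δ ∧ coneUpT δ l α ⊆ Ω

def lowerInner (Ω : Set ℂ) (l : ℂ) (α : ℝ) : Prop := ∃ δ : ℝ, 0 < δ ∧ coneDownT δ l α ⊆ Ω

/-- The type II boundary `∂_{II,α}^{LG} K`. -/
def typeII (K : Set ℂ) (A : ℝ → ℝ) (Ω : Set ℂ) (α : ℝ) : Set ℂ :=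
  {l | l ∈ typeI K A α ∧ (upperInner Ω l α ∨ lowerInner Ω l α)}

/-- One-dimensional Hausdorff measure on `ℂ`. -/
def H1m : Measure ℂ := Measure.hausdorffMeasure 1

/-- Support of a positive measure. -/
def suppM (ν : Measure ℂ) : Set ℂ := {z | ∀ r : ℝ, 0 < r → 0 < ν (ball z r)}

/-! ### Bounds for analytic capacity -/

/-- Maximum principle in the exterior of a disc, for a function with limit `d` at infinity:
the inversion `ζ ↦ w0 + 1/ζ` makes infinity a removable singularity. -/
lemma exterior_max {q : ℂ → ℂ} {w0 d : ℂ} {r s M : ℝ} (hr : 0 < r) (hrs : r < s)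
    (hq : DifferentiableOn ℂ q (closedBall w0 r)ᶜ)
    (hlim : Tendsto q (cobounded ℂ) (𝓝 d)) (hM : ∀ z ∈ sphere w0 s, ‖q z‖ ≤ M) :
    ‖d‖ ≤ M ∧ ∀ z, s ≤ dist z w0 → ‖q z‖ ≤ M := by
  have hs : 0 < s := hr.trans hrs
  set v : ℂ → ℂ := Function.update (fun ζ => q (w0 + ζ⁻¹)) 0 d with hv
  have hv0 : v 0 = d := by simp [hv]
  have hvne : ∀ ζ, ζ ≠ 0 → v ζ = q (w0 + ζ⁻¹) := fun ζ h => by simp [hv, h]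
  have hcont : ContinuousAt v 0 := by
    rw [hv, continuousAt_update_same]
    refine hlim.comp ?_
    have h1 : Tendsto (fun ζ : ℂ => ζ⁻¹) (𝓝[≠] 0) (cobounded ℂ) := tendsto_inv₀_nhdsNE_zero
    rw [← tendsto_norm_atTop_iff_cobounded] at h1 ⊢
    refine tendsto_atTop_mono (f := fun ζ : ℂ => -‖w0‖ + ‖ζ⁻¹‖) (fun ζ => ?_)
      (tendsto_atTop_add_const_left _ _ h1)
    have := norm_sub_norm_le (ζ⁻¹) (-w0)
    rw [sub_neg_eq_add, norm_neg, add_comm ζ⁻¹ w0] at this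
    linarith
  have hdiff : DifferentiableOn ℂ v (ball 0 r⁻¹) := by
    rw [← differentiableOn_compl_singleton_and_continuousAt_iff
      (ball_mem_nhds (0 : ℂ) (inv_pos.2 hr))]
    refine ⟨?_, hcont⟩
    have : DifferentiableOn ℂ (fun ζ => q (w0 + ζ⁻¹)) (ball 0 r⁻¹ \ {0}) := by
      refine hq.comp (t := (closedBall w0 r)ᶜ) ?_ ?_
      · refine (differentiableOn_const _).add (differentiableOn_inv.mono ?_)
        intro x hx; exact hx.2
      · intro x hx
        have hx0 : x ≠ 0 := hx.2
        have h1 : ‖x‖ < r⁻¹ := by simpa using hx.1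
        have : r < ‖x‖⁻¹ := by
          rwa [lt_inv_comm₀ hr (norm_pos_iff.2 hx0)]
        simp [this]
    exact this.congr fun ζ hζ => hvne ζ hζ.2
  have hsr : s⁻¹ < r⁻¹ := inv_strictAnti₀ hr hrs
  have key : ∀ ζ ∈ closedBall (0 : ℂ) s⁻¹, ‖v ζ‖ ≤ M := by
    intro ζ hζ
    have hcl : closure (ball (0 : ℂ) s⁻¹) = closedBall 0 s⁻¹ := closure_ball _ (inv_pos.2 hs).ne'
    refine norm_le_of_forall_mem_frontier_norm_le (U := ball (0 : ℂ) s⁻¹) isBounded_ball ?_ ?_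
      (hcl ▸ hζ)
    · apply DifferentiableOn.diffContOnCl
      rw [hcl]
      exact hdiff.mono (closedBall_subset_ball hsr)
    · intro z hz
      rw [frontier_ball _ (inv_pos.2 hs).ne'] at hz
      have hz' : ‖z‖ = s⁻¹ := by simpa using hz
      have hz0 : z ≠ 0 := by
        rw [← norm_pos_iff, hz']; exact inv_pos.2 hs
      rw [hvne z hz0]
      apply hM
      simp [hz']
  refine ⟨hv0 ▸ key 0 (by simp [hs.le]), fun z hz => ?_⟩
  have hz0 : z - w0 ≠ 0 := by
    rw [← norm_pos_iff, ← dist_eq_norm]; linarith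
  have := key (z - w0)⁻¹ (by
    rw [mem_closedBall, dist_zero_right, norm_inv, ← dist_eq_norm]
    exact inv_anti₀ hs hz)
  rw [hvne _ (inv_ne_zero hz0)] at this
  simpa using this

/-- The set whose supremum is `capAux F` is bounded above for `F` in a disc of radius `δ`; this is
what keeps the real suprema in `capAux` and `anCap` from taking the junk value `0`. -/
lemma cap_set_le {F : Set ℂ} {w0 : ℂ} {δ : ℝ} (hδ : 0 < δ) (hF : F ⊆ ball w0 δ) :
    ∀ r ∈ {r : ℝ | ∃ f : ℂ → ℂ, DifferentiableOn ℂ f Fᶜ ∧ (∀ z ∈ Fᶜ, ‖f z‖ ≤ 1) ∧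
    ∃ f0 d : ℂ, Tendsto f (cobounded ℂ) (𝓝 f0) ∧
      Tendsto (fun z => z * (f z - f0)) (cobounded ℂ) (𝓝 d) ∧ r = ‖d‖}, r ≤ 4 * δ := by
  rintro r ⟨f, hf, hb, f0, d, h0, hd, rfl⟩
  have hsub : (closedBall w0 δ)ᶜ ⊆ Fᶜ := compl_subset_compl.2 (hF.trans ball_subset_closedBall)
  have hs : sphere w0 (2 * δ) ⊆ Fᶜ := fun z hz => hsub (by
    rw [mem_sphere] at hz
    simp only [mem_compl_iff, mem_closedBall, hz]; linarith)
  have hf0 : ‖f0‖ ≤ 1 := (exterior_max hδ (by linarith : δ < 2 * δ) (hf.mono hsub) h0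
    fun z hz => hb z (hs hz)).1
  have hlim : Tendsto (fun z => (z - w0) * (f z - f0)) (cobounded ℂ) (𝓝 d) := by
    have h1 : Tendsto (fun z => w0 * (f z - f0)) (cobounded ℂ) (𝓝 (w0 * (f0 - f0))) :=
      (h0.sub_const f0).const_mul w0
    simpa [sub_mul] using hd.sub h1
  refine (exterior_max (w0 := w0) hδ (by linarith : δ < 2 * δ) ?_ hlim fun z hz => ?_).1
  · exact (differentiableOn_id.sub_const _).mul ((hf.mono hsub).sub_const _)
  · have h1 := hb z (hs hz)
    have h2 : ‖z - w0‖ = 2 * δ := by rwa [mem_sphere, dist_eq_norm] at hz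
    rw [norm_mul, h2]
    have h3 : ‖f z - f0‖ ≤ 2 := (norm_sub_le _ _).trans (by linarith)
    nlinarith

/-- A function bounded by `A` off a compact `F ⊆ E` and vanishing at infinity is a competitor for
`anCap E` after division by `A`. -/
lemma le_anCap {E F : Set ℂ} {w0 : ℂ} {δ A : ℝ} (hδ : 0 < δ) (hE : E ⊆ ball w0 δ)
    (hFc : IsCompact F) (hF : F ⊆ E) {u : ℂ → ℂ} {d : ℂ} (hA : 0 < A)
    (hu : DifferentiableOn ℂ u Fᶜ) (hb : ∀ z ∈ Fᶜ, ‖u z‖ ≤ A)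
    (h0 : Tendsto u (cobounded ℂ) (𝓝 0))
    (hd : Tendsto (fun z => z * u z) (cobounded ℂ) (𝓝 d)) : ‖d‖ / A ≤ anCap E := by
  have h1 : ‖d‖ / A ≤ capAux F := by
    refine le_csSup ⟨4 * δ, cap_set_le hδ (hF.trans hE)⟩
      ⟨fun z => u z / A, hu.div_const _, fun z hz => ?_, 0, d / A, ?_, ?_, ?_⟩
    · rw [norm_div, norm_real, Real.norm_of_nonneg hA.le, div_le_one hA]
      exact hb z hz
    · simpa using h0.div_const (A : ℂ)
    · simpa [mul_div_assoc] using hd.div_const (A : ℂ)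
    · rw [norm_div, norm_real, Real.norm_of_nonneg hA.le]
  refine h1.trans (le_csSup ⟨4 * δ, ?_⟩ ⟨F, hFc, hF, rfl⟩)
  rintro r ⟨F', -, hF', rfl⟩
  exact Real.sSup_le (cap_set_le hδ (hF'.trans hE)) (by linarith)

/-! ### Square roots along polygonal paths -/

/-- The Möbius map `(z - q) / (z - p)` takes values on the ray removed from the slit plane only
on the segment `[p, q]`, so its principal square root is analytic off that segment. -/
lemma ratio_mem_slitPlane {p q z : ℂ} (hz : z ∉ segment ℝ p q) :
    (z - q) / (z - p) ∈ slitPlane := by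
  have hp : z - p ≠ 0 := fun h => hz (by rw [sub_eq_zero.1 h]; exact left_mem_segment ℝ p q)
  rw [mem_slitPlane_iff_not_le_zero]
  intro h
  set t := -((z - q) / (z - p)).re with ht
  have him : ((z - q) / (z - p)).im = 0 := (Complex.le_def.1 h).2
  have ht0 : 0 ≤ t := by have := (Complex.le_def.1 h).1; simp only [zero_re] at this; linarith
  have h2 : (z - q) / (z - p) = ((-t : ℝ) : ℂ) := by
    apply Complex.ext
    · simp [ht]
    · simp [him]
  rw [div_eq_iff hp] at h2
  apply hz
  refine ⟨t / (1 + t), 1 / (1 + t), by positivity, by positivity, by field_simp; ring, ?_⟩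
  have h1t : ((1 : ℂ) + t) ≠ 0 := by
    exact_mod_cast (by positivity : (1 + t : ℝ) ≠ 0)
  simp only [real_smul]
  push_cast at h2 ⊢
  field_simp
  linear_combination -h2

/-- A branch of `√((z - b) / (z - a))`, normalised to be `1` at infinity, lives off a polygonal
path from `a` to `b`: multiply the principal branches belonging to the successive segments. -/
lemma chain_sqrt {V : Set ℂ} {a b : ℂ} (ha : a ∈ V)
    (h : Relation.ReflTransGen (fun p q => segment ℝ p q ⊆ V) a b) :
    ∃ (E : Set ℂ) (s : ℂ → ℂ), IsCompact E ∧ E ⊆ V ∧ a ∈ E ∧ b ∈ E ∧ DifferentiableOn ℂ s Eᶜ ∧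
      (∀ z ∈ Eᶜ, s z ^ 2 * (z - a) = z - b) ∧ Tendsto s (cobounded ℂ) (𝓝 1) := by
  induction h with
  | refl =>
    exact ⟨{a}, fun _ => 1, isCompact_singleton, by simpa using ha, rfl, rfl,
      differentiableOn_const _, fun z _ => by simp, tendsto_const_nhds⟩
  | @tail b c _ hbc ih =>
    obtain ⟨E, s, hE, hEV, haE, hbE, hs, hs2, hs1⟩ := ih
    have hseg : IsCompact (segment ℝ b c) := by
      rw [← convexHull_pair]
      exact ((Set.finite_singleton c).insert b).isCompact_convexHull (𝕜 := ℝ)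
    refine ⟨E ∪ segment ℝ b c, fun z => s z * ((z - c) / (z - b)) ^ (1 / 2 : ℂ),
      hE.union hseg, union_subset hEV hbc, Or.inl haE, Or.inr (right_mem_segment ℝ b c), ?_, ?_, ?_⟩
    · rw [compl_union]
      refine (hs.mono inter_subset_left).mul ?_
      intro z hz
      have hzb : z - b ≠ 0 := fun h => hz.1 (by rwa [sub_eq_zero.1 h])
      apply DifferentiableAt.differentiableWithinAt
      refine DifferentiableAt.cpow ?_ (differentiableAt_const _) (ratio_mem_slitPlane hz.2)
      exact (differentiableAt_id.sub_const _).div (differentiableAt_id.sub_const _) hzb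
    · rintro z hz
      rw [compl_union] at hz
      have hzb : z - b ≠ 0 := fun h => hz.1 (by rwa [sub_eq_zero.1 h])
      have hsq : (((z - c) / (z - b)) ^ (1 / 2 : ℂ)) ^ 2 = (z - c) / (z - b) := by
        rw [← cpow_nat_mul]; norm_num
      rw [mul_pow, hsq]
      have := hs2 z hz.1
      field_simp
      linear_combination (z - c) * this
    · have hlim : Tendsto (fun z : ℂ => (z - c) / (z - b)) (cobounded ℂ) (𝓝 1) := by
        have h1 : Tendsto (fun z : ℂ => (1 - c * z⁻¹) / (1 - b * z⁻¹)) (cobounded ℂ)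
            (𝓝 ((1 - c * 0) / (1 - b * 0))) :=
          ((tendsto_inv₀_cobounded.const_mul c).const_sub 1).div
            ((tendsto_inv₀_cobounded.const_mul b).const_sub 1) (by simp)
        simp only [mul_zero, sub_zero, div_one] at h1
        refine h1.congr' ?_
        filter_upwards [eventually_ne_cobounded (0 : ℂ)] with z hz
        rw [← mul_div_mul_right (1 - c * z⁻¹) (1 - b * z⁻¹) hz]
        congr 1 <;> field_simp
      have h2 : Tendsto (fun z : ℂ => ((z - c) / (z - b)) ^ (1 / 2 : ℂ)) (cobounded ℂ)
          (𝓝 (1 ^ (1 / 2 : ℂ))) := hlim.cpow tendsto_const_nhds (by simp)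
      simpa using hs1.mul h2

/-! ### The Cauchy–Pompeiu formula -/

/-- Twice the Cauchy–Riemann operator: `2 ∂G/∂z̄ = ∂G/∂x + i ∂G/∂y`. -/
def dbar2 (G : ℂ → ℂ) (z : ℂ) : ℂ := fderiv ℝ G z 1 + I * fderiv ℝ G z I

/-- The Cauchy–Pompeiu formula at the centre of a disc: in polar coordinates the angular part of
`∂̄` integrates to zero and the radial part telescopes. -/
lemma integral_disc_dbar2 {H : ℂ → ℂ} (hH : ContDiff ℝ 1 H) {R : ℝ} (hR : 0 < R) :
    ∫ w, (ball (0 : ℂ) R).indicator (fun w => dbar2 H w / w) w =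
      ∫ θ in (-π)..π, (H (R * exp (θ * I)) - H 0) := by
  set e : ℝ → ℂ := fun θ => exp (θ * I) with he
  have hec : Continuous e := by fun_prop
  have hfc : Continuous (fderiv ℝ H) := hH.continuous_fderiv one_ne_zero
  have hHd : Differentiable ℝ H := hH.differentiable one_ne_zero
  set J1 : ℝ × ℝ → ℂ := fun p => fderiv ℝ H (p.1 * e p.2) (e p.2) with hJ1
  set J2 : ℝ × ℝ → ℂ := fun p => fderiv ℝ H (p.1 * e p.2) (I * e p.2) with hJ2
  have hJ1c : Continuous J1 := by
    apply Continuous.clm_apply <;> fun_prop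
  have hJ2c : Continuous J2 := by
    apply Continuous.clm_apply <;> fun_prop
  set S : Set (ℝ × ℝ) := Ioo 0 R ×ˢ Ioo (-π) π with hS
  have hJint : ∀ J : ℝ × ℝ → ℂ, Continuous J → IntegrableOn J S := fun J hJ =>
    (hJ.continuousOn.integrableOn_compact
      (isCompact_Icc.prod isCompact_Icc : IsCompact (Icc 0 R ×ˢ Icc (-π) π))).mono_set
      (prod_mono Ioo_subset_Icc_self Ioo_subset_Icc_self)
  -- polar coordinates turn the area integral into an integral of `J1 + i J2`
  have h1 : ∫ w, (ball (0 : ℂ) R).indicator (fun w => dbar2 H w / w) w =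
      ∫ p in S, (J1 p + I * J2 p) := by
    rw [← Complex.integral_comp_polarCoord_symm]
    have hST : S ⊆ polarCoord.target := by
      rw [polarCoord_target]; exact prod_mono Ioo_subset_Ioi_self subset_rfl
    have hSm : MeasurableSet S := measurableSet_Ioo.prod measurableSet_Ioo
    rw [← integral_indicator polarCoord.open_target.measurableSet, ← integral_indicator hSm]
    congr 1
    ext1 p
    by_cases hpT : p ∈ polarCoord.target
    · rw [indicator_of_mem hpT]
      have hpT' := hpT
      rw [polarCoord_target] at hpT'
      have hp0 : 0 < p.1 := hpT'.1
      have hpe : Complex.polarCoord.symm p = p.1 * e p.2 := by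
        rw [Complex.polarCoord_symm_apply, he]
        simp [exp_mul_I]
      by_cases hpR : p.1 < R
      · have hpb : Complex.polarCoord.symm p ∈ ball (0 : ℂ) R := by
          rw [mem_ball_zero_iff, norm_polarCoord_symm, abs_of_pos hp0]; exact hpR
        have hpS : p ∈ S := ⟨⟨hp0, hpR⟩, hpT'.2⟩
        rw [indicator_of_mem hpb, indicator_of_mem hpS, hpe, real_smul]
        have hp0' : (p.1 : ℂ) ≠ 0 := by exact_mod_cast hp0.ne'
        have hene : e p.2 ≠ 0 := exp_ne_zero _
        set D := fderiv ℝ H (p.1 * e p.2) with hD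
        -- `D v + i D (i v) = conj v * (D 1 + i D i)`, and `conj v = 1 / v` for the unit vector `v = e p.2`
        have hlin : ∀ v : ℂ, D v = v.re * D 1 + v.im * D I := fun v => by
          have hv : v = v.re • (1 : ℂ) + v.im • I := by
            rw [real_smul, real_smul, mul_one, re_add_im]
          conv_lhs => rw [hv]
          rw [map_add, map_smul, map_smul, real_smul, real_smul]
        have hn : (e p.2).re ^ 2 + (e p.2).im ^ 2 = 1 := by
          simp [he, exp_ofReal_mul_I_re, exp_ofReal_mul_I_im]
        have hn' : ((e p.2).re : ℂ) ^ 2 + ((e p.2).im : ℂ) ^ 2 = 1 := by exact_mod_cast hn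
        have hre : (I * e p.2).re = -(e p.2).im := by simp
        have him : (I * e p.2).im = (e p.2).re := by simp
        simp only [hJ1, hJ2, dbar2]
        rw [← hD, hlin (e p.2), hlin (I * e p.2), hre, him]
        rw [mul_div_assoc', mul_div_mul_left _ _ hp0', div_eq_iff hene]
        conv_rhs => rw [← re_add_im (e p.2)]
        simp only [add_re, ofReal_re, mul_re, I_re, mul_zero, ofReal_im, I_im, mul_one, sub_self,
          add_zero, add_im, mul_im, zero_add]
        push_cast
        linear_combination (-(D 1 + I * D I)) * hn' +
          (D 1 * (e p.2).im ^ 2 - D I * (e p.2).re * (e p.2).im) * I_sq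
      · have hpb : Complex.polarCoord.symm p ∉ ball (0 : ℂ) R := by
          rw [mem_ball_zero_iff, norm_polarCoord_symm, abs_of_pos hp0]; exact hpR
        have hpS : p ∉ S := fun h => hpR h.1.2
        rw [indicator_of_notMem hpb, indicator_of_notMem hpS, smul_zero]
    · rw [indicator_of_notMem hpT, indicator_of_notMem fun h => hpT (hST h)]
  rw [h1, integral_add (hJint _ hJ1c) ((hJint _ hJ2c).const_mul I), integral_const_mul]
  -- the angular derivative integrates to zero over each circle
  have h2 : ∫ p in S, J2 p = 0 := by
    rw [hS, Measure.volume_eq_prod,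
      setIntegral_prod _ (hJint _ hJ2c : IntegrableOn J2 S (volume.prod volume))]
    refine setIntegral_eq_zero_of_forall_eq_zero fun r hr => ?_
    rw [← integral_Ioc_eq_integral_Ioo,
      ← intervalIntegral.integral_of_le (by linarith [Real.pi_pos])]
    have hd : ∀ θ : ℝ, HasDerivAt (fun θ : ℝ => H (r * e θ)) (r * J2 (r, θ)) θ := by
      intro θ
      have h3 : HasDerivAt (fun θ : ℝ => (r : ℂ) * e θ) (r * (I * e θ)) θ := by
        have h4 : HasDerivAt (fun θ : ℝ => (θ : ℂ) * I) (1 * I) θ :=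
          (hasDerivAt_id θ).ofReal_comp.mul_const I
        refine ((h4.cexp).const_mul (r : ℂ)).congr_deriv ?_
        rw [he]; ring
      refine ((hHd (r * e θ)).hasFDerivAt.comp_hasDerivAt θ h3).congr_deriv ?_
      rw [hJ2, ← real_smul (x := r) (z := I * e θ), map_smul, real_smul]
    have h6 := intervalIntegral.integral_eq_sub_of_hasDerivAt (a := -π) (b := π)
      (fun θ _ => hd θ) (Continuous.intervalIntegrable (by fun_prop) _ _)
    have hper : e π = e (-π) := by
      simp [he, exp_pi_mul_I, exp_neg]
    rw [intervalIntegral.integral_const_mul, hper, sub_self] at h6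
    exact (mul_eq_zero.1 h6).resolve_left (by exact_mod_cast hr.1.ne')
  rw [h2, mul_zero, add_zero, hS, Measure.volume_eq_prod,
    setIntegral_prod _ (hJint _ hJ1c : IntegrableOn J1 S (volume.prod volume)),
    integral_integral_swap (by
      rw [Measure.prod_restrict]; exact hJint _ hJ1c),
    intervalIntegral.integral_of_le (by linarith [Real.pi_pos]), integral_Ioc_eq_integral_Ioo]
  refine setIntegral_congr_fun measurableSet_Ioo fun θ _ => ?_
  -- the radial derivative integrates to the increment along each ray
  change ∫ r in Ioo 0 R, J1 (r, θ) = _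
  rw [← integral_Ioc_eq_integral_Ioo, ← intervalIntegral.integral_of_le hR.le]
  have hd : ∀ r : ℝ, HasDerivAt (fun r : ℝ => H (r * e θ)) (J1 (r, θ)) r := by
    intro r
    have h3 : HasDerivAt (fun r : ℝ => (r : ℂ) * e θ) (1 * e θ) r :=
      (hasDerivAt_id r).ofReal_comp.mul_const (e θ)
    rw [one_mul] at h3
    exact (hHd (r * e θ)).hasFDerivAt.comp_hasDerivAt r h3
  have h6 := intervalIntegral.integral_eq_sub_of_hasDerivAt (a := 0) (b := R)
    (fun r _ => hd r) (Continuous.intervalIntegrable (by fun_prop) _ _)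
  simpa [he] using h6

/-- A `C¹` function vanishing at infinity whose `∂̄`-derivative has bounded support is the Cauchy
transform of that derivative. -/
lemma cauchy_pompeiu {G : ℂ → ℂ} (hG : ContDiff ℝ 1 G) (h0 : Tendsto G (cobounded ℂ) (𝓝 0))
    {R0 : ℝ} (hsupp : ∀ z, R0 < ‖z‖ → dbar2 G z = 0) (z : ℂ) :
    ∫ w, dbar2 G w / (w - z) = -(2 * π) * G z := by
  set H : ℂ → ℂ := fun w => G (w + z) with hHdef
  have hH : ContDiff ℝ 1 H := hG.comp (contDiff_id.add contDiff_const)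
  have hdb : ∀ w, dbar2 H w = dbar2 G (w + z) := fun w => by
    simp only [dbar2, hHdef, fderiv_comp_add_right]
  have htr : ∫ w, dbar2 G w / (w - z) = ∫ w, dbar2 H w / w := by
    rw [← integral_add_right_eq_self _ z]
    simp [hdb]
  have hlim : Tendsto H (cobounded ℂ) (𝓝 0) := by
    refine h0.comp ?_
    rw [← tendsto_norm_atTop_iff_cobounded]
    refine tendsto_atTop_mono (f := fun w : ℂ => -‖z‖ + ‖w‖) (fun w => ?_)
      (tendsto_atTop_add_const_left _ _ tendsto_norm_cobounded_atTop)
    have := norm_sub_norm_le w (-z)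
    rw [sub_neg_eq_add, norm_neg] at this
    linarith
  rw [htr, ← sub_eq_zero, ← norm_le_zero_iff]
  refine le_of_forall_pos_le_add fun ε hε => ?_
  have hev := (Metric.tendsto_nhds.1 hlim (ε / (2 * π)) (by positivity))
  rw [← comap_norm_atTop, eventually_comap, eventually_atTop] at hev
  obtain ⟨R1, hR1⟩ := hev
  set R := max R1 (max 1 (R0 + ‖z‖ + 1)) with hRdef
  have hRpos : 0 < R := lt_of_lt_of_le one_pos ((le_max_left _ _).trans (le_max_right _ _))
  have hR2 : R0 + ‖z‖ + 1 ≤ R := (le_max_right _ _).trans (le_max_right _ _)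
  have hdisc := integral_disc_dbar2 hH hRpos
  have hind : (ball (0 : ℂ) R).indicator (fun w => dbar2 H w / w) = fun w => dbar2 H w / w := by
    rw [indicator_eq_self]
    intro w hw
    by_contra hwR
    rw [mem_ball_zero_iff, not_lt] at hwR
    apply hw
    have := norm_sub_norm_le w (-z)
    rw [sub_neg_eq_add, norm_neg] at this
    simp [hdb, hsupp (w + z) (by linarith)]
  rw [hind] at hdisc
  have hHc : Continuous fun θ : ℝ => H (R * exp (θ * I)) := by
    have := hH.continuous
    fun_prop
  rw [hdisc, intervalIntegral.integral_sub (hHc.intervalIntegrable _ _)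
    (continuous_const.intervalIntegrable _ _), intervalIntegral.integral_const]
  have hz : H 0 = G z := by simp [hHdef]
  have : (∫ θ in (-π)..π, H (R * exp (θ * I))) - (π - -π) • H 0 - -(2 * π) * G z =
      ∫ θ in (-π)..π, H (R * exp (θ * I)) := by
    rw [hz, real_smul]; push_cast; ring
  rw [this, zero_add]
  have hb := intervalIntegral.norm_integral_le_of_norm_le_const (a := -π) (b := π)
    (f := fun θ : ℝ => H (R * exp (θ * I))) (C := ε / (2 * π)) fun θ _ => by
      have h := hR1 R (le_max_left _ _) (R * exp (θ * I))
        (by simp [abs_of_pos hRpos, norm_exp_ofReal_mul_I])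
      rw [dist_zero_right] at h
      exact h.le
  refine hb.trans (le_of_eq ?_)
  rw [show π - -π = 2 * π by ring, abs_of_pos Real.two_pi_pos]
  field_simp

/-! ### Cauchy transforms -/

/-- Up to an additive constant `1`, the kernel `1/|w|` is dominated by an integrable function `k`
(its restriction to the unit disc), which gives estimates uniform in the pole `z`. -/
lemma exists_kernel : ∃ k : ℂ → ℝ≥0∞, ∫⁻ w, k w ≠ ∞ ∧
    ∀ (T : Set ℂ) (z : ℂ), MeasurableSet T →
      ∫⁻ w in T, ‖w - z‖ₑ⁻¹ ≤ (∫⁻ w in (fun w => w + z) ⁻¹' T, k w) + volume T := by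
  set k : ℂ → ℝ≥0∞ := (ball (0 : ℂ) 1).indicator fun w => ‖w‖ₑ⁻¹ with hk
  have hk1 : ∀ w, ‖w‖ₑ⁻¹ ≤ k w + 1 := by
    intro w
    by_cases h : w ∈ ball (0 : ℂ) 1
    · simp [hk, h]
    · have : (1 : ℝ≥0∞) ≤ ‖w‖ₑ := by
        rw [mem_ball_zero_iff, not_lt] at h
        rw [← ofReal_norm, ENNReal.one_le_ofReal]
        exact h
      exact (ENNReal.inv_le_one.2 this).trans le_add_self
  have hkint : ∫⁻ w, k w ≠ ∞ := by
    rw [← Complex.lintegral_comp_polarCoord_symm, polarCoord_target]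
    refine ne_of_lt (lt_of_le_of_lt (b := ∫⁻ p in (Ioi (0 : ℝ) ×ˢ Ioo (-π) π),
      (Iio (1 : ℝ) ×ˢ univ).indicator (fun _ => (1 : ℝ≥0∞)) p) ?_ ?_)
    · refine setLIntegral_mono' (measurableSet_Ioi.prod measurableSet_Ioo) fun p hp => ?_
      have hp0 : 0 < p.1 := hp.1
      by_cases h : p.1 < 1
      · have h1 : p ∈ Iio (1 : ℝ) ×ˢ (univ : Set ℝ) := ⟨h, trivial⟩
        rw [indicator_of_mem h1]
        have hn : ‖Complex.polarCoord.symm p‖ₑ = ENNReal.ofReal p.1 := by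
          rw [← ofReal_norm, norm_polarCoord_symm, abs_of_pos hp0]
        calc ENNReal.ofReal p.1 • k (Complex.polarCoord.symm p)
            ≤ ENNReal.ofReal p.1 * ‖Complex.polarCoord.symm p‖ₑ⁻¹ := by
              rw [smul_eq_mul]
              gcongr
              exact indicator_le_self _ _ _
          _ ≤ 1 := by rw [hn]; exact ENNReal.mul_inv_le_one _
      · have : Complex.polarCoord.symm p ∉ ball (0 : ℂ) 1 := by
          rw [mem_ball_zero_iff, norm_polarCoord_symm, abs_of_pos hp0]; exact h
        rw [hk, indicator_of_notMem this, smul_zero]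
        exact zero_le
    · rw [lintegral_indicator (measurableSet_Iio.prod MeasurableSet.univ),
        Measure.restrict_restrict (measurableSet_Iio.prod MeasurableSet.univ), prod_inter_prod,
        setLIntegral_one, Measure.volume_eq_prod, Measure.prod_prod, inter_comm, Ioi_inter_Iio]
      simp
  refine ⟨k, hkint, fun T z hT => ?_⟩
  have hpre : MeasurableSet ((fun w => w + z) ⁻¹' T) := (measurable_add_const z) hT
  have h1 : ∫⁻ w in T, k (w - z) = ∫⁻ w in (fun w => w + z) ⁻¹' T, k w := by
    rw [← lintegral_indicator hT, ← lintegral_add_right_eq_self _ z, ← lintegral_indicator hpre]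
    refine lintegral_congr fun w => ?_
    by_cases hw : w + z ∈ T <;> simp [indicator, hw]
  calc ∫⁻ w in T, ‖w - z‖ₑ⁻¹ ≤ ∫⁻ w in T, (k (w - z) + 1) := lintegral_mono fun w => hk1 _
    _ = _ := by rw [lintegral_add_right _ measurable_const, setLIntegral_one, h1]

lemma lintegral_inv_ne_top {T : Set ℂ} (hT : MeasurableSet T) (hTv : volume T ≠ ∞) (z : ℂ) :
    ∫⁻ w in T, ‖w - z‖ₑ⁻¹ ≠ ∞ := by
  obtain ⟨k, hk, hkT⟩ := exists_kernel
  refine ne_top_of_le_ne_top (ENNReal.add_ne_top.2 ⟨hk, hTv⟩) ((hkT T z hT).trans ?_)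
  exact add_le_add (setLIntegral_le_lintegral _ _) le_rfl

/-- The integral of `1/|w - z|` over a set of small area is small, uniformly in `z`. -/
lemma lintegral_inv_small {η : ℝ≥0∞} (hη : η ≠ 0) :
    ∃ ε : ℝ≥0∞, 0 < ε ∧ ∀ T : Set ℂ, MeasurableSet T → volume T < ε → ∀ z : ℂ,
      ∫⁻ w in T, ‖w - z‖ₑ⁻¹ ≤ η := by
  obtain ⟨k, hk, hkT⟩ := exists_kernel
  have hη2 : η / 2 ≠ 0 := by simpa using hη
  obtain ⟨ε, hε, h⟩ := exists_pos_setLIntegral_lt_of_measure_lt hk hη2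
  refine ⟨min ε (η / 2), lt_min hε (pos_iff_ne_zero.2 hη2), fun T hT hTv z => ?_⟩
  refine (hkT T z hT).trans ?_
  rw [← ENNReal.add_halves η]
  refine add_le_add (h _ ?_).le (hTv.le.trans (min_le_right _ _))
  rw [measure_preimage_add_right]
  exact hTv.trans_le (min_le_left _ _)

lemma cauchy_differentiableOn {F : Set ℂ} (hF : IsCompact F) {ψ : ℂ → ℂ}
    (hψ : IntegrableOn ψ F) :
    DifferentiableOn ℂ (fun z => ∫ w in F, ψ w / (w - z)) Fᶜ := by
  intro z0 hz0
  obtain ⟨r, hr, hrF⟩ := Metric.isOpen_iff.1 hF.isClosed.isOpen_compl z0 hz0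
  have hdist : ∀ w ∈ F, ∀ x ∈ ball z0 (r / 2), r / 2 ≤ ‖w - x‖ := by
    intro w hw x hx
    have h1 : r ≤ dist w z0 := not_lt.1 fun h => hrF (mem_ball.2 h) hw
    have h2 := dist_triangle w x z0
    rw [mem_ball] at hx
    rw [← dist_eq_norm]; linarith
  have hm : ∀ x : ℂ, ∀ n : ℕ, AEStronglyMeasurable (fun w => ψ w / (w - x) ^ n)
      (volume.restrict F) := fun x n => by
    refine hψ.aestronglyMeasurable.div₀ ?_
    exact Measurable.aestronglyMeasurable (by fun_prop)
  have hz0b : z0 ∈ ball z0 (r / 2) := mem_ball_self (by linarith)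
  have hbd : ∀ w ∈ F, ∀ n : ℕ, ∀ x ∈ ball z0 (r / 2),
      ‖ψ w / (w - x) ^ n‖ ≤ ‖ψ w‖ * ((r / 2) ^ n)⁻¹ := by
    intro w hw n x hx
    rw [norm_div, norm_pow, div_eq_mul_inv]
    have := hdist w hw x hx
    gcongr
  refine (hasDerivAt_integral_of_dominated_loc_of_deriv_le (F := fun z w => ψ w / (w - z))
    (F' := fun z w => ψ w / (w - z) ^ 2) (bound := fun w => ‖ψ w‖ * ((r / 2) ^ 2)⁻¹)
    (ball_mem_nhds z0 (by linarith : 0 < r / 2)) (Eventually.of_forall fun x => by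
      simpa using hm x 1) ?_ (hm z0 2) ?_
    (hψ.norm.mul_const _) ?_).2.differentiableAt.differentiableWithinAt
  · refine (hψ.norm.mul_const ((r / 2) ^ 1)⁻¹).mono' (by simpa using hm z0 1) ?_
    filter_upwards [ae_restrict_mem hF.measurableSet] with w hw
    simpa using hbd w hw 1 z0 hz0b
  · filter_upwards [ae_restrict_mem hF.measurableSet] with w hw x hx
    exact hbd w hw 2 x hx
  · filter_upwards [ae_restrict_mem hF.measurableSet] with w hw x hx
    have hne : w - x ≠ 0 := by
      rw [← norm_pos_iff]; have := hdist w hw x hx; linarith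
    have h1 := (hasDerivAt_const x (ψ w)).fun_div ((hasDerivAt_id' x).const_sub w) hne
    simpa using h1

/-- The leading coefficient at infinity of a Cauchy transform is minus the total mass of the
density (the kernel being `1/(w - z)`). -/
lemma cauchy_tendsto {F : Set ℂ} (hF : IsCompact F) {ψ : ℂ → ℂ} (hψ : IntegrableOn ψ F) :
    Tendsto (fun z => z * ∫ w in F, ψ w / (w - z)) (cobounded ℂ) (𝓝 (-∫ w in F, ψ w)) := by
  have : (cobounded ℂ).IsCountablyGenerated := by
    rw [← comap_norm_atTop]; infer_instance
  obtain ⟨R, hR⟩ := hF.isBounded.subset_closedBall 0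
  simp_rw [← integral_const_mul, ← integral_neg]
  refine tendsto_integral_filter_of_dominated_convergence (fun w => 2 * ‖ψ w‖) ?_ ?_
    (hψ.norm.const_mul 2) ?_
  · refine Eventually.of_forall fun z => ?_
    refine AEStronglyMeasurable.const_mul (hψ.aestronglyMeasurable.div₀ ?_) _
    exact Measurable.aestronglyMeasurable (by fun_prop)
  · have hev : ∀ᶠ z : ℂ in cobounded ℂ, 2 * |R| + 1 ≤ ‖z‖ :=
      tendsto_norm_cobounded_atTop.eventually_ge_atTop _
    filter_upwards [hev] with z hz
    filter_upwards [ae_restrict_mem hF.measurableSet] with w hw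
    have hw' : ‖w‖ ≤ R := by simpa using hR hw
    have h1 := norm_sub_norm_le z w
    rw [norm_sub_rev] at h1
    have h2 := le_abs_self R
    have h3 : ‖z‖ ≤ 2 * ‖w - z‖ := by linarith
    have h4 : 0 < ‖w - z‖ := by have := abs_nonneg R; linarith
    rw [norm_mul, norm_div, mul_div_assoc', div_le_iff₀ h4]
    nlinarith [norm_nonneg (ψ w)]
  · refine Eventually.of_forall fun w => ?_
    have h1 : Tendsto (fun z : ℂ => ψ w / (w * z⁻¹ - 1)) (cobounded ℂ)
        (𝓝 (ψ w / (w * 0 - 1))) :=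
      tendsto_const_nhds.div ((tendsto_inv₀_cobounded.const_mul w).sub_const 1) (by simp)
    have h2 : ψ w / (w * 0 - 1) = -ψ w := by rw [mul_zero, zero_sub, div_neg, div_one]
    rw [h2] at h1
    refine h1.congr' ?_
    filter_upwards [eventually_ne_cobounded (0 : ℂ)] with z hz
    have : w - z = (w * z⁻¹ - 1) * z := by field_simp
    rw [this, mul_div_assoc', mul_comm z, mul_div_mul_right _ _ hz]

/-! ### Analytic functions attached to polygonal paths -/

/-- The function `g(z) = z - (a + b)/2 - √((z - a)(z - b))` attached to a polygonal path from `a` to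
`b`. It bounds from below the capacity of the path in terms of `|a - b|` alone. -/
lemma chain_function {V : Set ℂ} {w0 a b : ℂ} {δ : ℝ} (hδ : 0 < δ) (hV : V ⊆ ball w0 δ)
    (ha : a ∈ V) (h : Relation.ReflTransGen (fun p q => segment ℝ p q ⊆ V) a b) :
    ∃ (L : Set ℂ) (g : ℂ → ℂ), IsCompact L ∧ L ⊆ V ∧ DifferentiableOn ℂ g Lᶜ ∧
      (∀ z ∈ Lᶜ, ‖g z‖ ≤ 6 * δ) ∧ Tendsto g (cobounded ℂ) (𝓝 0) ∧
      Tendsto (fun z => z * g z) (cobounded ℂ) (𝓝 ((a - b) ^ 2 / 8)) := by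
  obtain ⟨L, s, hL, hLV, haL, hbL, hs, hs2, hs1⟩ := chain_sqrt ha h
  set g : ℂ → ℂ := fun z => z - (a + b) / 2 - (z - a) * s z with hg
  have hgd : DifferentiableOn ℂ g Lᶜ :=
    (differentiableOn_id.sub_const _).sub ((differentiableOn_id.sub_const _).mul hs)
  have hLev : ∀ᶠ z in cobounded ℂ, z ∈ Lᶜ := isBounded_def.1 hL.isBounded
  have hprod : ∀ z ∈ Lᶜ, g z * (z - (a + b) / 2 + (z - a) * s z) = (a - b) ^ 2 / 4 := by
    intro z hz
    simp only [hg]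
    linear_combination -(z - a) * hs2 z hz
  have hzg : Tendsto (fun z => z * g z) (cobounded ℂ) (𝓝 ((a - b) ^ 2 / 8)) := by
    have hi : Tendsto (fun z : ℂ => z⁻¹) (cobounded ℂ) (𝓝 0) := tendsto_inv₀_cobounded
    have h1 : Tendsto (fun z => 1 - (a + b) / 2 * z⁻¹ + (1 - a * z⁻¹) * s z) (cobounded ℂ)
        (𝓝 (1 - (a + b) / 2 * 0 + (1 - a * 0) * 1)) :=
      ((hi.const_mul _).const_sub 1).add (((hi.const_mul _).const_sub 1).mul hs1)
    rw [show (1 - (a + b) / 2 * 0 + (1 - a * 0) * 1 : ℂ) = 2 by ring] at h1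
    have h2 := (tendsto_const_nhds (x := (a - b) ^ 2 / 4)).div h1 two_ne_zero
    rw [show (a - b) ^ 2 / 4 / 2 = (a - b) ^ 2 / 8 by ring] at h2
    refine h2.congr' ?_
    filter_upwards [hLev, eventually_ne_cobounded (0 : ℂ), h1.eventually_ne two_ne_zero]
      with z hzL hz0 hne
    rw [Pi.div_apply, div_eq_iff hne, ← hprod z hzL]
    field_simp
  have hg0 : Tendsto g (cobounded ℂ) (𝓝 0) := by
    have := hzg.mul tendsto_inv₀_cobounded
    rw [mul_zero] at this
    refine this.congr' ?_
    filter_upwards [eventually_ne_cobounded (0 : ℂ)] with z hz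
    field_simp
  refine ⟨L, g, hL, hLV, hgd, ?_, hg0, hzg⟩
  have hLb : L ⊆ ball w0 δ := hLV.trans hV
  have haw : ‖a - w0‖ < δ := by rw [← dist_eq_norm]; exact hLb haL
  have hbw : ‖b - w0‖ < δ := by rw [← dist_eq_norm]; exact hLb hbL
  have hnear : ∀ z ∈ Lᶜ, ‖z - w0‖ ≤ 2 * δ → ‖g z‖ ≤ 6 * δ := by
    intro z hz hzw
    have h1 : ‖z - a‖ ≤ 3 * δ := by
      have := norm_sub_le (z - w0) (a - w0)
      rw [sub_sub_sub_cancel_right] at this; linarith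
    have h2 : ‖z - b‖ ≤ 3 * δ := by
      have := norm_sub_le (z - w0) (b - w0)
      rw [sub_sub_sub_cancel_right] at this; linarith
    have h3 : ‖(z - a) * s z‖ ^ 2 ≤ (3 * δ) ^ 2 := by
      have : ((z - a) * s z) ^ 2 = (z - a) * (z - b) := by
        linear_combination (z - a) * hs2 z hz
      rw [← norm_pow, this, norm_mul, sq]
      gcongr
    have h4 : ‖(z - a) * s z‖ ≤ 3 * δ := le_of_sq_le_sq h3 (by positivity)
    have h5 : ‖z - (a + b) / 2‖ ≤ 3 * δ := by
      have : z - (a + b) / 2 = ((z - a) + (z - b)) / 2 := by ring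
      rw [this, norm_div, RCLike.norm_ofNat]
      have := norm_add_le (z - a) (z - b)
      linarith
    exact (norm_sub_le _ _).trans (by linarith)
  intro z hz
  rcases le_total ‖z - w0‖ (2 * δ) with hzw | hzw
  · exact hnear z hz hzw
  · refine (exterior_max (w0 := w0) hδ (by linarith : δ < 2 * δ) (hgd.mono ?_) hg0 ?_).2 z
      (by rwa [dist_eq_norm])
    · exact compl_subset_compl.2 (hLb.trans ball_subset_closedBall)
    · intro x hx
      rw [mem_sphere, dist_eq_norm] at hx
      refine hnear x (fun hxL => ?_) hx.le
      have := hLb hxL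
      rw [mem_ball, dist_eq_norm] at this
      linarith

/-! ### Moving a singular set to a set of almost full area -/

/-- Multiplying `g` by a smooth cutoff that vanishes near `L` gives a globally `C¹` function with
the same bound, whose `∂̄`-derivative lives in a compact subset of `V`. -/
lemma exists_smoothing {L V : Set ℂ} {g : ℂ → ℂ} {A : ℝ} (hV : IsOpen V) (hL : IsCompact L)
    (hLV : L ⊆ V) (hA : 0 < A) (hg : DifferentiableOn ℂ g Lᶜ) (hb : ∀ z ∈ Lᶜ, ‖g z‖ ≤ A) :
    ∃ (S : Set ℂ) (G : ℂ → ℂ), IsCompact S ∧ S ⊆ V ∧ ContDiff ℝ 1 G ∧ (∀ z, ‖G z‖ ≤ A) ∧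
      (∀ z ∉ S, G z = g z) ∧ ∀ z ∉ S, dbar2 G z = 0 := by
  obtain ⟨S, hS, hLS, hSV⟩ := exists_compact_between hL hV hLV
  obtain ⟨χ, hχ1, hχ0, hχ⟩ := exists_contMDiffMap_one_nhds_of_subset_interior
    (n := 1) (modelWithCornersSelf ℝ ℂ) hL.isClosed hLS
  have hχc : ContDiff ℝ 1 χ := χ.contMDiff.contDiff
  rw [eventually_nhdsSet_iff_forall] at hχ1
  set G : ℂ → ℂ := fun z => (1 - χ z) • g z with hG
  have hGg : ∀ z ∉ S, G z = g z := fun z hz => by simp [hG, hχ0 z hz]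
  have hLo : IsOpen Lᶜ := hL.isClosed.isOpen_compl
  refine ⟨S, G, hS, hSV, ?_, ?_, hGg, ?_⟩
  · rw [contDiff_iff_contDiffAt]
    intro z
    by_cases hz : z ∈ L
    · refine (contDiffAt_const (c := (0 : ℂ))).congr_of_eventuallyEq ?_
      filter_upwards [hχ1 z hz] with w hw
      simp [hG, hw]
    · have h1 : ContDiffAt ℂ 1 g z := (hg.analyticAt (hLo.mem_nhds hz)).contDiffAt
      exact (contDiffAt_const.sub hχc.contDiffAt).smul (h1.restrict_scalars ℝ)
  · intro z
    by_cases hz : z ∈ L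
    · have : χ z = 1 := (hχ1 z hz).self_of_nhds
      simp [hG, this, hA.le]
    · have h1 := hχ z
      rw [hG, norm_smul, Real.norm_of_nonneg (by linarith [h1.2])]
      have h2 := hb z hz
      nlinarith [h1.1, norm_nonneg (g z)]
  · intro z hz
    have hzL : z ∈ Lᶜ := fun h => hz (interior_subset (hLS h))
    have hev : G =ᶠ[𝓝 z] g := by
      filter_upwards [hS.isClosed.isOpen_compl.mem_nhds hz] with w hw using hGg w hw
    have hd := (hg.differentiableAt (hLo.mem_nhds hzL)).hasFDerivAt.restrictScalars ℝ
    have h2 := (hd.congr_of_eventuallyEq hev).fderiv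
    have h3 : fderiv ℂ g z I = I * fderiv ℂ g z 1 := by
      conv_lhs => rw [← mul_one I, ← smul_eq_mul, map_smul, smul_eq_mul]
    simp only [dbar2, h2, ContinuousLinearMap.coe_restrictScalars', h3]
    linear_combination fderiv ℂ g z 1 * I_sq

/-- If `V \ E` has area zero, then a bounded analytic function with singularities in a compact
`L ⊆ V` bounds `anCap E` from below, although `L` itself need not meet `E`. After smoothing, the
function is the Cauchy transform of a bounded density on a compact `S ⊆ V`; since `E` fills almost
all of `S`, restricting the density to a compact `F ⊆ S ∩ E` hardly changes the transform. -/
lemma cap_ge_of_null {E V L : Set ℂ} {w0 d : ℂ} {δ A : ℝ} {g : ℂ → ℂ} (hδ : 0 < δ)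
    (hE : E ⊆ ball w0 δ) (hEo : MeasurableSet E) (hV : IsOpen V) (hnull : volume (V \ E) = 0)
    (hL : IsCompact L) (hLV : L ⊆ V) (hA : 0 < A) (hg : DifferentiableOn ℂ g Lᶜ)
    (hb : ∀ z ∈ Lᶜ, ‖g z‖ ≤ A) (h0 : Tendsto g (cobounded ℂ) (𝓝 0))
    (hd : Tendsto (fun z => z * g z) (cobounded ℂ) (𝓝 d)) (hd0 : d ≠ 0) :
    ‖d‖ / (4 * A) ≤ anCap E := by
  obtain ⟨S, G, hS, hSV, hGc, hGA, hGg, hGS⟩ := exists_smoothing hV hL hLV hA hg hb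
  have hGev : G =ᶠ[cobounded ℂ] g := by
    filter_upwards [isBounded_def.1 hS.isBounded] with z hz using hGg z hz
  have hG0 : Tendsto G (cobounded ℂ) (𝓝 0) := h0.congr' hGev.symm
  have hGd : Tendsto (fun z => z * G z) (cobounded ℂ) (𝓝 d) :=
    hd.congr' (hGev.symm.mono fun z hz => by simp only [hz])
  set ψ := dbar2 G with hψ
  have hψc : Continuous ψ := by
    have h1 := hGc.continuous_fderiv one_ne_zero
    have h2 : ∀ v : ℂ, Continuous fun z => fderiv ℝ G z v := fun v => h1.clm_apply continuous_const
    exact (h2 1).add (continuous_const.mul (h2 I))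
  obtain ⟨B0, hB0⟩ := hS.exists_bound_of_continuousOn hψc.continuousOn
  set B := |B0| + 1 with hBdef
  have hBpos : 0 < B := by positivity
  have hB : ∀ z, ‖ψ z‖ ≤ B := fun z => by
    by_cases hz : z ∈ S
    · exact (hB0 z hz).trans ((le_abs_self _).trans (by linarith))
    · rw [hGS z hz, norm_zero]; exact hBpos.le
  obtain ⟨R0, hR0⟩ := hS.isBounded.subset_closedBall 0
  have hCP : ∀ z, ∫ w in S, ψ w / (w - z) = -(2 * π) * G z := fun z => by
    rw [← cauchy_pompeiu hGc hG0 (R0 := R0) (fun w hw => hGS w fun hwS => by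
      have : ‖w‖ ≤ R0 := by simpa using hR0 hwS
      linarith) z]
    refine setIntegral_eq_integral_of_forall_compl_eq_zero fun w hw => ?_
    rw [hGS w hw, zero_div]
  have hψS : IntegrableOn ψ S := hψc.continuousOn.integrableOn_compact hS
  have hSv : volume S ≠ ∞ := hS.measure_lt_top.ne
  have hp : (0 : ℝ) < 2 * π := Real.two_pi_pos
  have hp1 : (1 : ℝ) ≤ 2 * π := by linarith [Real.pi_gt_three]
  have hpc : (2 * π : ℂ) ≠ 0 := by exact_mod_cast hp.ne'
  have hpn : ‖((2 * π : ℂ))‖ = 2 * π := by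
    rw [norm_mul, norm_real, Real.norm_of_nonneg Real.pi_pos.le]; simp
  have hdS : ∫ w in S, ψ w = 2 * π * d := by
    have h1 := cauchy_tendsto hS hψS
    have h2 : Tendsto (fun z => z * ∫ w in S, ψ w / (w - z)) (cobounded ℂ)
        (𝓝 (-(2 * π) * d)) := by
      refine (hGd.const_mul (-(2 * π : ℂ))).congr fun z => ?_
      rw [hCP]; ring
    have := tendsto_nhds_unique h1 h2
    linear_combination -this
  -- the tolerance for replacing `S` by a compact subset of `E`
  set η : ℝ := min A (‖d‖ / 2) with hη
  have hηpos : 0 < η := lt_min hA (by have := norm_pos_iff.2 hd0; linarith)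
  set η1 : ℝ := η / B with hη1
  have hη1pos : 0 < η1 := by positivity
  have hBη : B * η1 = η := by rw [hη1]; field_simp
  obtain ⟨ε, hε, hsmall⟩ := lintegral_inv_small (η := ENNReal.ofReal η1) (by simpa using hη1pos)
  obtain ⟨F, hFS, hF, hFv⟩ := (hS.measurableSet.inter hEo).exists_isCompact_sdiff_lt
    (μ := volume) (measure_ne_top_of_subset inter_subset_left hSv)
    (ε := min ε (ENNReal.ofReal η1)) (lt_min hε (by simpa using hη1pos)).ne'
  have hFS' : F ⊆ S := hFS.trans inter_subset_left
  set T := S \ F with hT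
  have hTm : MeasurableSet T := hS.measurableSet.diff hF.measurableSet
  have hTv : volume T < min ε (ENNReal.ofReal η1) := by
    refine lt_of_le_of_lt ?_ hFv
    have : T ⊆ ((S ∩ E) \ F) ∪ (V \ E) := by
      rintro x ⟨hxS, hxF⟩
      by_cases hxE : x ∈ E
      · exact Or.inl ⟨⟨hxS, hxE⟩, hxF⟩
      · exact Or.inr ⟨hSV hxS, hxE⟩
    refine (measure_mono this).trans ((measure_union_le _ _).trans ?_)
    rw [hnull, add_zero]
  have hpt : ∀ z w, ‖ψ w / (w - z)‖ₑ ≤ ENNReal.ofReal B * ‖w - z‖ₑ⁻¹ := fun z w => by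
    by_cases h : w - z = 0
    · simp [h]
    · rw [div_eq_mul_inv, enorm_mul, enorm_inv h]
      gcongr
      rw [← ofReal_norm]
      exact ENNReal.ofReal_le_ofReal (hB w)
  have hintS : ∀ z, IntegrableOn (fun w => ψ w / (w - z)) S := fun z => by
    refine ⟨(hψc.measurable.div (measurable_id.sub_const z)).aestronglyMeasurable, ?_⟩
    refine lt_of_le_of_lt (b := ∫⁻ w in S, ENNReal.ofReal B * ‖w - z‖ₑ⁻¹) ?_ ?_
    · exact lintegral_mono fun w => hpt z w
    · rw [lintegral_const_mul' _ _ ENNReal.ofReal_ne_top]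
      exact ENNReal.mul_lt_top ENNReal.ofReal_lt_top
        (lintegral_inv_ne_top hS.measurableSet hSv z).lt_top
  set u : ℂ → ℂ := fun z => -(2 * π : ℂ)⁻¹ * ∫ w in F, ψ w / (w - z) with hu
  have hψF : IntegrableOn ψ F := hψS.mono_set hFS'
  have hunion : F ∪ T = S := union_sdiff_cancel hFS'
  have hdisj : Disjoint F T := disjoint_sdiff_right
  have hsplit : ∀ φ : ℂ → ℂ, IntegrableOn φ S →
      (∫ w in S, φ w) = (∫ w in F, φ w) + ∫ w in T, φ w := fun φ hφ => by
    rw [← hunion, setIntegral_union hdisj hTm (hφ.mono_set hFS') (hφ.mono_set sdiff_subset)]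
  have huG : ∀ z, ‖u z‖ ≤ 2 * A := by
    intro z
    have h1 := hsplit _ (hintS z)
    rw [hCP] at h1
    have h2 : u z = G z + (2 * π : ℂ)⁻¹ * ∫ w in T, ψ w / (w - z) := by
      simp only [hu]
      field_simp
      linear_combination h1
    have h3 : ‖∫ w in T, ψ w / (w - z)‖ ≤ η := by
      rw [← ENNReal.ofReal_le_ofReal_iff hηpos.le, ofReal_norm]
      refine (enorm_integral_le_lintegral_enorm _).trans
        ((lintegral_mono fun w => hpt z w).trans ?_)
      rw [lintegral_const_mul' _ _ ENNReal.ofReal_ne_top, ← hBη, ENNReal.ofReal_mul hBpos.le]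
      gcongr
      exact hsmall T hTm (hTv.trans_le (min_le_left _ _)) z
    have h4 : ‖(2 * π : ℂ)⁻¹ * ∫ w in T, ψ w / (w - z)‖ ≤ A := by
      rw [norm_mul, norm_inv, hpn]
      have : (2 * π)⁻¹ ≤ 1 := inv_le_one_of_one_le₀ hp1
      have hηA : η ≤ A := min_le_left _ _
      nlinarith [norm_nonneg (∫ w in T, ψ w / (w - z))]
    rw [h2]
    exact (norm_add_le _ _).trans (by linarith [hGA z])
  set dF : ℂ := (2 * π : ℂ)⁻¹ * ∫ w in F, ψ w with hdF
  have hdFn : ‖d‖ / 2 ≤ ‖dF‖ := by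
    have h1 := hsplit ψ hψS
    rw [hdS] at h1
    have h2 : d = dF + (2 * π : ℂ)⁻¹ * ∫ w in T, ψ w := by
      rw [hdF]
      field_simp
      linear_combination h1
    have h3 : ‖∫ w in T, ψ w‖ ≤ η := by
      refine (norm_setIntegral_le_of_norm_le_const
        (lt_of_lt_of_le hTv le_top) fun w _ => hB w).trans ?_
      rw [← hBη]
      gcongr
      exact ENNReal.toReal_le_of_le_ofReal hη1pos.le (hTv.le.trans (min_le_right _ _))
    have h4 : ‖(2 * π : ℂ)⁻¹ * ∫ w in T, ψ w‖ ≤ ‖d‖ / 2 := by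
      rw [norm_mul, norm_inv, hpn]
      have : (2 * π)⁻¹ ≤ 1 := inv_le_one_of_one_le₀ hp1
      have hηA : η ≤ ‖d‖ / 2 := min_le_right _ _
      nlinarith [norm_nonneg (∫ w in T, ψ w)]
    have h5 := norm_add_le dF ((2 * π : ℂ)⁻¹ * ∫ w in T, ψ w)
    rw [← h2] at h5
    linarith
  have hzu : Tendsto (fun z => z * u z) (cobounded ℂ) (𝓝 dF) := by
    have := (cauchy_tendsto hF hψF).const_mul (-(2 * π : ℂ)⁻¹)
    rw [neg_mul_neg] at this
    refine this.congr fun z => ?_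
    simp only [hu]; ring
  have hu0 : Tendsto u (cobounded ℂ) (𝓝 0) := by
    have := hzu.mul tendsto_inv₀_cobounded
    rw [mul_zero] at this
    refine this.congr' ?_
    filter_upwards [eventually_ne_cobounded (0 : ℂ)] with z hz
    field_simp
  have hfin := le_anCap hδ hE hF (hFS.trans inter_subset_right) (by linarith : 0 < 2 * A)
    ((cauchy_differentiableOn hF hψF).const_mul _) (fun z _ => huG z) hu0 hzu
  refine le_trans ?_ hfin
  rw [div_le_div_iff₀ (by positivity) (by positivity)]
  nlinarith

/-! ### The maximum principle -/

/-- The polygonally connected component of `l` in `{M < |f|}` leaves the disc of radius `δ/4` about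
`l`: otherwise `|f| ≤ M` on its frontier, and the maximum principle would give `|f l| ≤ M`. -/
lemma exists_far_chain {V : Set ℂ} {f : ℂ → ℂ} {w0 l : ℂ} {δ M : ℝ} (hδ : 0 < δ)
    (hf : DifferentiableOn ℂ f (ball w0 δ)) (hl : l ∈ ball w0 (δ / 2))
    (hV : V = {z | z ∈ ball w0 δ ∧ M < ‖f z‖}) (hVo : IsOpen V) (hlV : l ∈ V) :
    ∃ b, Relation.ReflTransGen (fun p q => segment ℝ p q ⊆ V) l b ∧ δ / 4 ≤ ‖l - b‖ := by
  by_contra! hcon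
  set Ω : Set ℂ := {b | Relation.ReflTransGen (fun p q => segment ℝ p q ⊆ V) l b} with hΩ
  have hsub : Ω ⊆ closedBall l (δ / 4) := fun b hb => by
    rw [mem_closedBall, dist_comm, dist_eq_norm]; exact (hcon b hb).le
  have hcl : closure Ω ⊆ ball w0 δ := by
    refine (closure_minimal hsub isClosed_closedBall).trans fun z hz => ?_
    rw [mem_closedBall] at hz
    rw [mem_ball] at hl ⊢
    have := dist_triangle z l w0
    linarith
  have hseg : ∀ z ∈ V, ∃ r > 0, ∀ x ∈ ball z r, ∀ y ∈ ball z r, segment ℝ x y ⊆ V := fun z hz => by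
    obtain ⟨r, hr, hrV⟩ := Metric.isOpen_iff.1 hVo z hz
    exact ⟨r, hr, fun x hx y hy => ((convex_ball z r).segment_subset hx hy).trans hrV⟩
  have hlΩ : l ∈ Ω := Relation.ReflTransGen.refl
  have key : ‖f l‖ ≤ M := by
    refine norm_le_of_forall_mem_frontier_norm_le (U := Ω) (isBounded_closedBall.subset hsub)
      (hf.mono hcl).diffContOnCl (fun z hz => ?_) (subset_closure hlΩ)
    by_contra! hlt
    have hzV : z ∈ V := by rw [hV]; exact ⟨hcl hz.1, hlt⟩
    obtain ⟨r, hr, hball⟩ := hseg z hzV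
    obtain ⟨x, hxΩ, hxz⟩ := Metric.mem_closure_iff.1 hz.1 r hr
    refine hz.2 (mem_interior.2 ⟨ball z r, fun y hy => ?_, isOpen_ball, mem_ball_self hr⟩)
    exact Relation.ReflTransGen.tail hxΩ (hball x (by rwa [mem_ball, dist_comm]) y hy)
  rw [hV] at hlV
  exact absurd hlV.2 (not_lt.2 key)

/-- Corollary 1 (CorollaryDSet), scaled version of Lemma 4: there is an absolute
constant `ε₁ > 0` so that if `γ(B(w₀,δ) ∖ K) < ε₁ δ`, then every uniform limit of
polynomials on `B̄(w₀,δ)` satisfies `|f(λ)| ≤ ‖f‖_{L^∞(B(w₀,δ) ∩ K)}` on `B(w₀,δ/2)`. -/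
theorem stmt3 :
    ∃ ε₁ : ℝ, 0 < ε₁ ∧
    ∀ (w₀ : ℂ) (δ : ℝ), 0 < δ →
    ∀ K : Set ℂ, IsCompact K →
      anCap (ball w₀ δ \ K) < ε₁ * δ →
      ∀ f : ℂ → ℂ,
        (∃ P : ℕ → Polynomial ℂ,
          TendstoUniformlyOn (fun n z => (P n).eval z) f atTop (closedBall w₀ δ)) →
        ∀ l ∈ ball w₀ (δ/2),
          ENNReal.ofReal ‖f l‖ ≤ eLpNorm f ⊤ (volume.restrict (ball w₀ δ ∩ K)) := by
  refine ⟨1 / 3072, by norm_num, fun w₀ δ hδ K hK hcap f ⟨P, hP⟩ l hl => ?_⟩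
  by_contra! hlt
  have hf : DifferentiableOn ℂ f (ball w₀ δ) :=
    (hP.mono ball_subset_closedBall).tendstoLocallyUniformlyOn.differentiableOn
      (Eventually.of_forall fun n => (P n).differentiable.differentiableOn) isOpen_ball
  set m := eLpNorm f ⊤ (volume.restrict (ball w₀ δ ∩ K)) with hm
  have hmt : m ≠ ∞ := ne_top_of_lt hlt
  have hMl : m.toReal < ‖f l‖ := (ENNReal.lt_ofReal_iff_toReal_lt hmt).1 hlt
  obtain ⟨V, hV⟩ : ∃ V : Set ℂ, V = {z | z ∈ ball w₀ δ ∧ m.toReal < ‖f z‖} := ⟨_, rfl⟩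
  have hVo : IsOpen V := by
    rw [hV]
    exact hf.continuousOn.norm.isOpen_inter_preimage isOpen_ball isOpen_Ioi
  have hlV : l ∈ V := by
    rw [hV]; exact ⟨ball_subset_ball (by linarith) hl, hMl⟩
  have hVb : V ⊆ ball w₀ δ := by rw [hV]; exact fun z hz => hz.1
  have hnull : volume (V \ (ball w₀ δ \ K)) = 0 := by
    have h1 : ∀ᵐ z ∂(volume.restrict (ball w₀ δ ∩ K)), ‖f z‖ₑ ≤ m := by
      rw [hm, eLpNorm_exponent_top]; exact ae_le_eLpNormEssSup
    rw [ae_restrict_iff' (measurableSet_ball.inter hK.measurableSet)] at h1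
    refine measure_mono_null (fun z hz => ?_) (ae_iff.1 h1)
    change ¬ _
    intro hzm
    have hzV : z ∈ ball w₀ δ ∧ m.toReal < ‖f z‖ := by have := hz.1; rwa [hV] at this
    have hzK : z ∈ K := by_contra fun h => hz.2 ⟨hzV.1, h⟩
    have h2 := hzm ⟨hzV.1, hzK⟩
    rw [← ofReal_norm, ENNReal.ofReal_le_iff_le_toReal hmt] at h2
    exact absurd hzV.2 (not_lt.2 h2)
  obtain ⟨b, hchain, hb⟩ := exists_far_chain hδ hf hl hV hVo hlV
  obtain ⟨L, g, hL, hLV, hg, hgb, hg0, hgd⟩ := chain_function hδ hVb hlV hchain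
  have hnorm : ‖(l - b) ^ 2 / 8‖ = ‖l - b‖ ^ 2 / 8 := by
    rw [norm_div, norm_pow]; simp
  have hd : δ ^ 2 / 128 ≤ ‖(l - b) ^ 2 / 8‖ := by
    rw [hnorm]; nlinarith
  have hd0 : (l - b) ^ 2 / 8 ≠ 0 := norm_pos_iff.1 (lt_of_lt_of_le (by positivity) hd)
  have hge := cap_ge_of_null hδ sdiff_subset (measurableSet_ball.diff hK.measurableSet) hVo hnull
    hL hLV (by positivity : 0 < 6 * δ) hg hgb hg0 hgd hd0
  refine absurd hcap (not_lt.2 (le_trans ?_ hge))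
  rw [le_div_iff₀ (by positivity)]
  nlinarith

end
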